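/- Let V₀, V₀' be coisotropic subspaces of V of the same dimension, with V₁ = V₀^⊥ and V₁' = (V₀')^⊥. Then there is a bijection between linear Lagrangian relations L on V with p₁(L) = V₀ and p₂(L) = V₀', and isometries V₀/V₁ → V₀'/V₁' (with respect to the induced nondegenerate forms on the quotients). -/

import Mathlib

open Module Submodule

variable {V : Type} [AddCommGroup V] [Module ℂ V]

/-- The form `B((v,w),(v',w')) = ⟨v|v'⟩ − ⟨w|w'⟩` on `V × V`. -/
noncomputable def BB (b : LinearMap.BilinForm ℂ V) : LinearMap.BilinForm ℂ (V × V) :=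
  LinearMap.mk₂ ℂ (fun p q => b p.1 q.1 - b p.2 q.2)
    (by intros; simp; ring)
    (by intros; simp; ring)
    (by intros; simp; ring)
    (by intros; simp; ring)

/-- A linear relation `L ⊆ V × V` is isotropic if `B` vanishes on it. -/
def IsIsotropicRel (b : LinearMap.BilinForm ℂ V) (L : Submodule ℂ (V × V)) : Prop :=
  ∀ p ∈ L, ∀ q ∈ L, BB b p q = 0

/-- A linear Lagrangian relation: an isotropic subspace of `V × V` of dimension `dim V`. -/
def IsLagrangianRel [FiniteDimensional ℂ V] (b : LinearMap.BilinForm ℂ V)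
    (L : Submodule ℂ (V × V)) : Prop :=
  IsIsotropicRel b L ∧ finrank ℂ L = finrank ℂ V

/-- Composition of linear relations: `rcomp L L' = L' ∘ L = {(x,z) | ∃ y, (x,y) ∈ L, (y,z) ∈ L'}`. -/
def rcomp (L L' : Submodule ℂ (V × V)) : Submodule ℂ (V × V) where
  carrier := {p | ∃ y, (p.1, y) ∈ L ∧ (y, p.2) ∈ L'}
  add_mem' := fun ⟨y, h1, h2⟩ ⟨y', h1', h2'⟩ => ⟨y + y', L.add_mem h1 h1', L'.add_mem h2 h2'⟩
  zero_mem' := ⟨0, L.zero_mem, L'.zero_mem⟩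
  smul_mem' := fun c p ⟨y, h1, h2⟩ => ⟨c • y, L.smul_mem c h1, L'.smul_mem c h2⟩

/-!
A Lagrangian relation `L` is its own orthogonal complement for the difference form. Isotropy says
`⟨x|y⟩ = ⟨x'|y'⟩` for `(x, x'), (y, y') ∈ L`; hence `x` is orthogonal to `p₁(L)` exactly when `x'`
is orthogonal to `p₂(L)`, and by the line test for isomorphisms the image of `L` in the product of
the two reductions is the graph of an isometry `φ`. Moreover `p₁(L)^⊥ × p₂(L)^⊥ ⊆ L^⊥ = L`, so `L`
is the full preimage of that graph. Conversely, the preimage of the graph of an isometry `φ` is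
isotropic. If `(v, w)` is orthogonal to it, pairing with `V₁ × 0` gives `v ∈ V₁^⊥ = V₀`; subtracting
some `(v, w')` with `φ[v] = [w']` then leaves `w - w' ∈ V₁'`, so that `φ[v] = [w]`.
-/

/-- A Lagrangian submodule for a bilinear form, defined as one that equals its own orthogonal
complement. No dimension enters, so the notion makes sense over any ring. -/
def IsLagrangian {R M : Type*} [CommRing R] [AddCommGroup M] [Module R M]
    (B : LinearMap.BilinForm R M) (L : Submodule R M) : Prop :=
  B.orthogonal L = L

theorem isLagrangian_iff_le_orthogonal_and_finrank {K E : Type*} [Field K] [AddCommGroup E]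
    [Module K E] [FiniteDimensional K E] {B : LinearMap.BilinForm K E} (hB : B.Nondegenerate)
    {L : Submodule K E} :
    IsLagrangian B L ↔ L ≤ B.orthogonal L ∧ 2 * finrank K L = finrank K E := by
  have hfinrank := LinearMap.BilinForm.finrank_orthogonal hB L
  have hle := L.finrank_le
  constructor
  · intro hL
    rw [hL] at hfinrank
    exact ⟨hL.ge, by lia⟩
  · rintro ⟨hiso, hdim⟩
    exact (eq_of_le_of_finrank_eq hiso (by lia)).symm

variable {R M N : Type*} [CommRing R] [AddCommGroup M] [Module R M] [AddCommGroup N] [Module R N]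
  {b : LinearMap.BilinForm R M} {c : LinearMap.BilinForm R N}

section DiffForm

/-- The form `⟨x|y⟩ - ⟨x'|y'⟩` on `M × N`, whose Lagrangian submodules are the Lagrangian relations
from `M` to `N`. -/
def diffForm (b : LinearMap.BilinForm R M) (c : LinearMap.BilinForm R N) :
    LinearMap.BilinForm R (M × N) :=
  b.compl₁₂ (LinearMap.fst R M N) (LinearMap.fst R M N) -
    c.compl₁₂ (LinearMap.snd R M N) (LinearMap.snd R M N)

theorem diffForm_apply (p q : M × N) : diffForm b c p q = b p.1 q.1 - c p.2 q.2 :=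
  rfl

theorem diffForm_nondegenerate (hb : b.Nondegenerate) (hc : c.Nondegenerate) :
    (diffForm b c).Nondegenerate := by
  refine ⟨fun p hp ↦ Prod.ext ?_ ?_, fun p hp ↦ Prod.ext ?_ ?_⟩
  · exact hb.1 _ fun y ↦ by simpa [diffForm_apply] using hp (y, 0)
  · exact hc.1 _ fun y' ↦ by simpa [diffForm_apply] using hp (0, y')
  · exact hb.2 _ fun y ↦ by simpa [diffForm_apply] using hp (y, 0)
  · exact hc.2 _ fun y' ↦ by simpa [diffForm_apply] using hp (0, y')

variable {L : Submodule R (M × N)}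

theorem orthogonal_prod_orthogonal_le_orthogonal_diffForm :
    (b.orthogonal (L.map (LinearMap.fst R M N))).prod
      (c.orthogonal (L.map (LinearMap.snd R M N))) ≤ (diffForm b c).orthogonal L := by
  intro p hp q hq
  change diffForm b c q p = 0
  rw [diffForm_apply, hp.1 q.1 (mem_map_of_mem hq), hp.2 q.2 (mem_map_of_mem hq), sub_zero]

theorem fst_mem_orthogonal_iff_snd_mem_orthogonal (hL : L ≤ (diffForm b c).orthogonal L)
    {p : M × N} (hp : p ∈ L) :
    p.1 ∈ b.orthogonal (L.map (LinearMap.fst R M N)) ↔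
      p.2 ∈ c.orthogonal (L.map (LinearMap.snd R M N)) := by
  have hpair : ∀ q ∈ L, b q.1 p.1 = c q.2 p.2 := fun q hq ↦ sub_eq_zero.1 (hL hp q hq)
  simp only [LinearMap.BilinForm.mem_orthogonal_iff, mem_map, forall_exists_index, and_imp,
    forall_apply_eq_imp_iff₂, LinearMap.fst_apply, LinearMap.snd_apply]
  exact forall₂_congr fun q hq ↦ by rw [hpair q hq]

end DiffForm

/-- The reduction `P / (P ∩ P^⊥)` of a submodule `P`; this is `P / P^⊥` when `P` is coisotropic. The
denominator is encoded as a submodule of `P`. -/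
abbrev Reduction (b : LinearMap.BilinForm R M) (P : Submodule R M) : Type _ :=
  P ⧸ (b.orthogonal P).comap P.subtype

namespace Reduction

variable {P : Submodule R M} {Q : Submodule R N}

theorem mk_eq_mk_iff {x y : P} :
    (Submodule.Quotient.mk x : Reduction b P) = Submodule.Quotient.mk y ↔
      (x : M) - y ∈ b.orthogonal P :=
  Submodule.Quotient.eq _

/-- Isometries between reductions. The induced forms are evaluated on arbitrary representatives,
which avoids having to descend them to the quotients. -/
def IsIsometry (φ : Reduction b P ≃ₗ[R] Reduction c Q) : Prop :=
  ∀ x y : P, ∀ x' y' : Q, φ (Submodule.Quotient.mk x) = Submodule.Quotient.mk x' →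
    φ (Submodule.Quotient.mk y) = Submodule.Quotient.mk y' → c (x' : N) (y' : N) = b (x : M) (y : M)

/-- The relation `{(x, x') ∈ P × Q | φ[x] = [x']}` attached to an isomorphism of reductions. -/
def relation (φ : Reduction b P ≃ₗ[R] Reduction c Q) : Submodule R (M × N) :=
  (φ.graph.comap ((mkQ _).prodMap (mkQ _))).map (P.subtype.prodMap Q.subtype)

theorem mem_relation_iff {φ : Reduction b P ≃ₗ[R] Reduction c Q} {p : M × N} :
    p ∈ relation φ ↔
      ∃ (x : P) (x' : Q), φ (Submodule.Quotient.mk x) = Submodule.Quotient.mk x' ∧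
        ((x : M), (x' : N)) = p :=
  ⟨fun ⟨u, hu, hup⟩ ↦ ⟨u.1, u.2, Eq.symm hu, hup⟩, fun ⟨x, x', h, hp⟩ ↦ ⟨(x, x'), h.symm, hp⟩⟩

theorem mk_mem_relation_iff {φ : Reduction b P ≃ₗ[R] Reduction c Q} {x : P} {x' : Q} :
    ((x : M), (x' : N)) ∈ relation φ ↔ φ (Submodule.Quotient.mk x) = Submodule.Quotient.mk x' := by
  simp [mem_relation_iff]

theorem exists_mk_mem_relation_left (φ : Reduction b P ≃ₗ[R] Reduction c Q) (x : P) :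
    ∃ x' : Q, ((x : M), (x' : N)) ∈ relation φ := by
  obtain ⟨x', hx'⟩ := mkQ_surjective _ (φ (Submodule.Quotient.mk x))
  exact ⟨x', mk_mem_relation_iff.2 hx'.symm⟩

theorem exists_mk_mem_relation_right (φ : Reduction b P ≃ₗ[R] Reduction c Q) (x' : Q) :
    ∃ x : P, ((x : M), (x' : N)) ∈ relation φ := by
  obtain ⟨x, hx⟩ := mkQ_surjective _ (φ.symm (Submodule.Quotient.mk x'))
  exact ⟨x, mk_mem_relation_iff.2 ((φ.eq_symm_apply).1 hx)⟩

theorem map_fst_relation (φ : Reduction b P ≃ₗ[R] Reduction c Q) :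
    (relation φ).map (LinearMap.fst R M N) = P := by
  apply le_antisymm
  · rintro _ ⟨_, ⟨u, -, rfl⟩, rfl⟩
    exact u.1.2
  · intro x hx
    obtain ⟨x', hx'⟩ := exists_mk_mem_relation_left φ ⟨x, hx⟩
    exact ⟨_, hx', rfl⟩

theorem map_snd_relation (φ : Reduction b P ≃ₗ[R] Reduction c Q) :
    (relation φ).map (LinearMap.snd R M N) = Q := by
  apply le_antisymm
  · rintro _ ⟨_, ⟨u, -, rfl⟩, rfl⟩
    exact u.2.2
  · intro x' hx'
    obtain ⟨x, hx⟩ := exists_mk_mem_relation_right φ ⟨x', hx'⟩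
    exact ⟨_, hx, rfl⟩

theorem relation_injective :
    Function.Injective (relation : (Reduction b P ≃ₗ[R] Reduction c Q) → Submodule R (M × N)) := by
  intro φ ψ h
  ext z
  obtain ⟨x, rfl⟩ := mkQ_surjective _ z
  obtain ⟨x', hx'⟩ := exists_mk_mem_relation_left φ x
  exact (mk_mem_relation_iff.1 hx').trans (mk_mem_relation_iff.1 (h ▸ hx')).symm

theorem isIsometry_iff_relation_le_orthogonal {φ : Reduction b P ≃ₗ[R] Reduction c Q} :
    IsIsometry φ ↔ relation φ ≤ (diffForm b c).orthogonal (relation φ) := by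
  constructor
  · intro hφ q hq p hp
    obtain ⟨x, x', hx, rfl⟩ := mem_relation_iff.1 hp
    obtain ⟨y, y', hy, rfl⟩ := mem_relation_iff.1 hq
    exact sub_eq_zero.2 (hφ x y x' y' hx hy).symm
  · intro hφ x y x' y' hx hy
    exact (sub_eq_zero.1 (hφ (mk_mem_relation_iff.2 hy) _ (mk_mem_relation_iff.2 hx))).symm

theorem mk_zero_mem_relation (hP : b.orthogonal P ≤ P) (φ : Reduction b P ≃ₗ[R] Reduction c Q)
    {x : M} (hx : x ∈ b.orthogonal P) : (x, (0 : N)) ∈ relation φ := by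
  have hmk : (Submodule.Quotient.mk ⟨x, hP hx⟩ : Reduction b P) = 0 :=
    (Submodule.Quotient.mk_eq_zero _).2 hx
  exact mem_relation_iff.2 ⟨⟨x, hP hx⟩, 0, by rw [hmk, map_zero, Submodule.Quotient.mk_zero], rfl⟩

theorem zero_mk_mem_relation (hQ : c.orthogonal Q ≤ Q) (φ : Reduction b P ≃ₗ[R] Reduction c Q)
    {x' : N} (hx' : x' ∈ c.orthogonal Q) : ((0 : M), x') ∈ relation φ := by
  have hmk : (Submodule.Quotient.mk ⟨x', hQ hx'⟩ : Reduction c Q) = 0 :=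
    (Submodule.Quotient.mk_eq_zero _).2 hx'
  exact mem_relation_iff.2 ⟨0, ⟨x', hQ hx'⟩, by rw [hmk, Submodule.Quotient.mk_zero, map_zero], rfl⟩

theorem IsIsometry.isLagrangian_relation {φ : Reduction b P ≃ₗ[R] Reduction c Q}
    (hφ : IsIsometry φ) (hP : b.orthogonal P ≤ P) (hPP : b.orthogonal (b.orthogonal P) ≤ P)
    (hQ : c.orthogonal Q ≤ Q) : IsLagrangian (diffForm b c) (relation φ) := by
  have hiso := isIsometry_iff_relation_le_orthogonal.1 hφ
  refine le_antisymm ?_ hiso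
  rintro ⟨v, w⟩ hvw
  have hv : v ∈ P := hPP fun x hx ↦ by
    simpa [diffForm_apply] using hvw _ (mk_zero_mem_relation hP φ hx)
  obtain ⟨w', hvw'⟩ := exists_mk_mem_relation_left φ ⟨v, hv⟩
  have hw : w - w' ∈ c.orthogonal Q := fun y' hy' ↦ by
    obtain ⟨y, hy⟩ := exists_mk_mem_relation_right φ ⟨y', hy'⟩
    simpa [diffForm_apply] using sub_mem (hiso hvw') hvw _ hy
  simpa using add_mem hvw' (zero_mk_mem_relation hQ φ hw)

theorem exists_forall_apply_mk_eq_mk_iff {L : Submodule R (M × N)}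
    (hL : L ≤ (diffForm b c).orthogonal L) :
    ∃ φ : Reduction b (L.map (LinearMap.fst R M N)) ≃ₗ[R]
        Reduction c (L.map (LinearMap.snd R M N)),
      ∀ x x', φ (Submodule.Quotient.mk x) = Submodule.Quotient.mk x' ↔
        ∃ p ∈ L, (x : M) - p.1 ∈ b.orthogonal (L.map (LinearMap.fst R M N)) ∧
          (x' : N) - p.2 ∈ c.orthogonal (L.map (LinearMap.snd R M N)) := by
  let toFst : L →ₗ[R] Reduction b (L.map (LinearMap.fst R M N)) :=
    mkQ _ ∘ₗ (LinearMap.fst R M N).submoduleMap L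
  let toSnd : L →ₗ[R] Reduction c (L.map (LinearMap.snd R M N)) :=
    mkQ _ ∘ₗ (LinearMap.snd R M N).submoduleMap L
  have hFst : Function.Surjective toFst :=
    (mkQ_surjective _).comp ((LinearMap.fst R M N).submoduleMap_surjective L)
  have hSnd : Function.Surjective toSnd :=
    (mkQ_surjective _).comp ((LinearMap.snd R M N).submoduleMap_surjective L)
  have hline (p q : L) : toFst p = toFst q ↔ toSnd p = toSnd q := by
    have hfst : toFst p = toFst q ↔ p.1.1 - q.1.1 ∈ b.orthogonal _ := mk_eq_mk_iff
    have hsnd : toSnd p = toSnd q ↔ p.1.2 - q.1.2 ∈ c.orthogonal _ := mk_eq_mk_iff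
    rw [hfst, hsnd]
    exact fst_mem_orthogonal_iff_snd_mem_orthogonal hL (sub_mem p.2 q.2)
  obtain ⟨φ, hφ⟩ :=
    LinearMap.exists_linearEquiv_eq_graph (f := toFst.prod toSnd) hFst hSnd hline
  refine ⟨φ, fun x x' ↦ ⟨fun h ↦ ?_, fun ⟨p, hp, hx, hx'⟩ ↦ ?_⟩⟩
  · obtain ⟨p, hp⟩ := hφ.ge (x := (Submodule.Quotient.mk x, Submodule.Quotient.mk x')) h.symm
    exact ⟨p, p.2, mk_eq_mk_iff.1 (congrArg Prod.fst hp).symm,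
      mk_eq_mk_iff.1 (congrArg Prod.snd hp).symm⟩
  · have hpφ : toSnd ⟨p, hp⟩ = φ (toFst ⟨p, hp⟩) := hφ.le ⟨⟨p, hp⟩, rfl⟩
    have hx : Submodule.Quotient.mk x = toFst ⟨p, hp⟩ := mk_eq_mk_iff.2 hx
    have hx' : Submodule.Quotient.mk x' = toSnd ⟨p, hp⟩ := mk_eq_mk_iff.2 hx'
    rw [hx, hx', hpφ]

theorem exists_relation_eq {L : Submodule R (M × N)} (hL : IsLagrangian (diffForm b c) L)
    (hP : L.map (LinearMap.fst R M N) = P) (hQ : L.map (LinearMap.snd R M N) = Q) :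
    ∃ φ : Reduction b P ≃ₗ[R] Reduction c Q, relation φ = L := by
  subst hP hQ
  obtain ⟨φ, hφ⟩ := exists_forall_apply_mk_eq_mk_iff hL.ge
  refine ⟨φ, le_antisymm ?_ ?_⟩
  · intro _ hq
    obtain ⟨x, x', hxx', rfl⟩ := mem_relation_iff.1 hq
    obtain ⟨p, hp, hx⟩ := (hφ x x').1 hxx'
    have hdiff : ((x : M), (x' : N)) - p ∈ L :=
      hL.le (orthogonal_prod_orthogonal_le_orthogonal_diffForm hx)
    exact (sub_mem_iff_left L hp).1 hdiff
  · intro p hp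
    have hmk := (hφ ⟨p.1, mem_map_of_mem hp⟩ ⟨p.2, mem_map_of_mem hp⟩).2 ⟨p, hp, by simp⟩
    exact mk_mem_relation_iff.2 hmk

end Reduction

theorem stmt10_general {P : Submodule R M} {Q : Submodule R N} (hP : b.orthogonal P ≤ P)
    (hPP : b.orthogonal (b.orthogonal P) ≤ P) (hQ : c.orthogonal Q ≤ Q) :
    ∃ e : {L : Submodule R (M × N) // IsLagrangian (diffForm b c) L ∧
            L.map (LinearMap.fst R M N) = P ∧ L.map (LinearMap.snd R M N) = Q} ≃
          {φ : Reduction b P ≃ₗ[R] Reduction c Q // Reduction.IsIsometry φ},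
      ∀ L (x : P) (x' : Q), ((x : M), (x' : N)) ∈ L.1 →
        (e L).1 (Submodule.Quotient.mk x) = Submodule.Quotient.mk x' := by
  let toRelation (φ : {φ : Reduction b P ≃ₗ[R] Reduction c Q // Reduction.IsIsometry φ}) :
      {L : Submodule R (M × N) // IsLagrangian (diffForm b c) L ∧
        L.map (LinearMap.fst R M N) = P ∧ L.map (LinearMap.snd R M N) = Q} :=
    ⟨Reduction.relation φ.1, φ.2.isLagrangian_relation hP hPP hQ, Reduction.map_fst_relation φ.1,
      Reduction.map_snd_relation φ.1⟩
  have hinj : Function.Injective toRelation := fun φ ψ h ↦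
    Subtype.ext (Reduction.relation_injective (congrArg Subtype.val h))
  have hsurj : Function.Surjective toRelation := by
    rintro ⟨L, hL, hLP, hLQ⟩
    obtain ⟨φ, rfl⟩ := Reduction.exists_relation_eq hL hLP hLQ
    exact ⟨⟨φ, Reduction.isIsometry_iff_relation_le_orthogonal.2 hL.ge⟩, rfl⟩
  let e := Equiv.ofBijective toRelation ⟨hinj, hsurj⟩
  refine ⟨e.symm, fun L x x' hxx' ↦ Reduction.mk_mem_relation_iff.1 ?_⟩
  have hL : Reduction.relation (e.symm L).1 = L.1 := congrArg Subtype.val (e.apply_symm_apply L)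
  rwa [hL]

theorem isLagrangianRel_iff_isLagrangian [FiniteDimensional ℂ V] {b : LinearMap.BilinForm ℂ V}
    (hb : b.Nondegenerate) {L : Submodule ℂ (V × V)} :
    IsLagrangianRel b L ↔ IsLagrangian (diffForm b b) L := by
  have hisotropic : IsIsotropicRel b L ↔ L ≤ (diffForm b b).orthogonal L :=
    ⟨fun h q hq p hp ↦ h p hp q hq, fun h p hp q hq ↦ h hq p hp⟩
  rw [isLagrangian_iff_le_orthogonal_and_finrank (diffForm_nondegenerate hb hb), IsLagrangianRel,
    hisotropic, finrank_prod, ← two_mul, Nat.mul_right_inj two_ne_zero]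

/-- Linear Lagrangian relations `L` with `p₁(L) = V₀`, `p₂(L) = V₀'` correspond
bijectively to isometries `V₀/V₀^⊥ → V₀'/(V₀')^⊥`; the correspondence sends `L` to
the map taking the class of `x` to the class of `x'` whenever `(x, x') ∈ L`. -/
theorem stmt10 {V : Type} [AddCommGroup V] [Module ℂ V] [FiniteDimensional ℂ V]
    (b : LinearMap.BilinForm ℂ V) (hsymm : b.IsSymm) (hnd : b.Nondegenerate)
    (V₀ V₀' : Submodule ℂ V)
    (hco : b.orthogonal V₀ ≤ V₀) (hco' : b.orthogonal V₀' ≤ V₀')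
    (hdim : finrank ℂ V₀ = finrank ℂ V₀') :
    ∃ e : {L : Submodule ℂ (V × V) // IsLagrangianRel b L ∧
            Submodule.map (LinearMap.fst ℂ V V) L = V₀ ∧
            Submodule.map (LinearMap.snd ℂ V V) L = V₀'} ≃
          {φ : (V₀ ⧸ (b.orthogonal V₀).comap V₀.subtype) ≃ₗ[ℂ]
               (V₀' ⧸ (b.orthogonal V₀').comap V₀'.subtype) //
            ∀ x y : V₀, ∀ x' y' : V₀',
              φ (Submodule.Quotient.mk x) = Submodule.Quotient.mk x' →
              φ (Submodule.Quotient.mk y) = Submodule.Quotient.mk y' →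
              b (x' : V) (y' : V) = b (x : V) (y : V)},
      ∀ (L : {L : Submodule ℂ (V × V) // IsLagrangianRel b L ∧
              Submodule.map (LinearMap.fst ℂ V V) L = V₀ ∧
              Submodule.map (LinearMap.snd ℂ V V) L = V₀'})
        (x : V₀) (x' : V₀'), ((x : V), (x' : V)) ∈ L.1 →
          (e L).1 (Submodule.Quotient.mk x) = Submodule.Quotient.mk x' := by
  obtain ⟨e, he⟩ := stmt10_general hco
    (LinearMap.BilinForm.orthogonal_orthogonal hnd hsymm.isRefl V₀).le hco'
  exact ⟨(Equiv.subtypeEquivRight fun _ ↦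
    and_congr_left' (isLagrangianRel_iff_isLagrangian hnd)).trans e, fun _ x x' h ↦ he _ x x' h⟩
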